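/- Let P > 0, g_B, g_E, σ² > 0, and ρ ∈ (0,1). Define Υ₃ = P²·g_B·g_E·(g_E − g_B·ρ²)·ρ²·σ² + P·(g_E² − g_B²)·ρ²·σ⁴ + (g_E·ρ² − g_B)·σ⁶ and assume Υ₃ ≤ 0. Then the secrecy rate F(P_E) = log₂(1 + (P − P_E)·g_B/(P_E·g_B·ρ² + σ²)) − log₂(1 + (P − P_E)·g_E·ρ²/(P_E·g_E + σ²)) is monotonically decreasing on [0, P]; hence its maximum over [0, P] is achieved at P_E = 0 (no power allocated to artificial noise). -/

import Mathlib

/-!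
Since `log₂` is increasing, it suffices that `(1 + SINR_B) / (1 + SINR_E)` decreases in the
artificial-noise power `z`. Clearing denominators makes it a quotient `p z / q z` of two quadratics
in `z`, and `p y * q x - p x * q y` is `y - x` times a combination of `1`, `x + y` and `x * y` whose
coefficients are the `2 × 2` minors of the coefficient matrix of `p` and `q`. The constant one is
exactly `Υ₃`; the other two are nonpositive because the legitimate user hears the signal better than
the noise and the eavesdropper hears the noise better than the signal.
-/

open Set

theorem antitoneOn_quadratic_div_quadratic {K : Type*} [Field K] [LinearOrder K]
    [IsStrictOrderedRing K] {p₀ p₁ p₂ q₀ q₁ q₂ : K} {s : Set K} (hs : s ⊆ Ici 0)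
    (hq : ∀ z ∈ s, 0 < q₂ * z ^ 2 + q₁ * z + q₀)
    (h₁₀ : p₁ * q₀ - p₀ * q₁ ≤ 0) (h₂₀ : p₂ * q₀ - p₀ * q₂ ≤ 0)
    (h₂₁ : p₂ * q₁ - p₁ * q₂ ≤ 0) :
    AntitoneOn (fun z ↦ (p₂ * z ^ 2 + p₁ * z + p₀) / (q₂ * z ^ 2 + q₁ * z + q₀)) s := by
  intro x hx y hy hxy
  have hx₀ : 0 ≤ x := hs hx
  have hy₀ : 0 ≤ y := hs hy
  have hminors : (p₁ * q₀ - p₀ * q₁) + (p₂ * q₀ - p₀ * q₂) * (x + y)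
      + (p₂ * q₁ - p₁ * q₂) * (x * y) ≤ 0 :=
    add_nonpos (add_nonpos h₁₀ (mul_nonpos_of_nonpos_of_nonneg h₂₀ (add_nonneg hx₀ hy₀)))
      (mul_nonpos_of_nonpos_of_nonneg h₂₁ (mul_nonneg hx₀ hy₀))
  refine (div_le_div_iff₀ (hq y hy) (hq x hx)).2 (sub_nonpos.1 ?_)
  calc _ = (y - x) * ((p₁ * q₀ - p₀ * q₁) + (p₂ * q₀ - p₀ * q₂) * (x + y)
        + (p₂ * q₁ - p₁ * q₂) * (x * y)) := by ring
    _ ≤ 0 := mul_nonpos_of_nonneg_of_nonpos (sub_nonneg.2 hxy) hminors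

/-- The signal-to-interference-plus-noise ratio at a receiver with noise power `σ2`, when `z` of the
total power `P` is spent on artificial noise and the rest on the signal. The receiver has gain `s`
for the signal and gain `n` for the artificial noise. -/
noncomputable def sinr (P s n σ2 z : ℝ) : ℝ :=
  (P - z) * s / (z * n + σ2)

/-- The secrecy rate in bits as a function of the artificial-noise power `z`: the legitimate user
has signal and noise gains `sB`, `nB`, the eavesdropper `sE`, `nE`. The paper's model is
`sB = g_B`, `nB = g_B ρ²`, `sE = g_E ρ²`, `nE = g_E`. -/
noncomputable def secrecyRate (P sB nB sE nE σ2 z : ℝ) : ℝ :=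
  Real.logb 2 (1 + sinr P sB nB σ2 z) - Real.logb 2 (1 + sinr P sE nE σ2 z)

section

variable {P s n σ2 z : ℝ}

theorem sinr_nonneg (hs : 0 ≤ s) (hn : 0 ≤ n) (hσ : 0 ≤ σ2) (hz : z ∈ Icc 0 P) :
    0 ≤ sinr P s n σ2 z :=
  div_nonneg (mul_nonneg (sub_nonneg.2 hz.2) hs) (add_nonneg (mul_nonneg hz.1 hn) hσ)

theorem one_add_sinr (h : z * n + σ2 ≠ 0) :
    1 + sinr P s n σ2 z = (σ2 + P * s + z * (n - s)) / (z * n + σ2) := by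
  rw [sinr, one_add_div h]
  ring

end

section

variable {P sB nB sE nE σ2 : ℝ}

theorem one_add_sinr_div_one_add_sinr {z : ℝ} (hB : z * nB + σ2 ≠ 0) (hE : z * nE + σ2 ≠ 0) :
    (1 + sinr P sB nB σ2 z) / (1 + sinr P sE nE σ2 z) =
      ((nB - sB) * nE * z ^ 2 + ((σ2 + P * sB) * nE + σ2 * (nB - sB)) * z + (σ2 + P * sB) * σ2) /
      (nB * (nE - sE) * z ^ 2 + (nB * (σ2 + P * sE) + σ2 * (nE - sE)) * z
        + σ2 * (σ2 + P * sE)) := by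
  rw [one_add_sinr hB, one_add_sinr hE, div_div_div_eq]
  ring

theorem antitoneOn_one_add_sinr_div_one_add_sinr (hP : 0 ≤ P) (hnB : 0 ≤ nB) (hB : nB ≤ sB)
    (hsE : 0 ≤ sE) (hE : sE ≤ nE) (hσ : 0 < σ2)
    (hΥ : P ^ 2 * sB * sE * (nE - nB) * σ2 + P * (sE * nE - sB * nB) * σ2 ^ 2
      + (sE - sB) * σ2 ^ 3 ≤ 0) :
    AntitoneOn (fun z ↦ (1 + sinr P sB nB σ2 z) / (1 + sinr P sE nE σ2 z)) (Icc 0 P) := by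
  have hsB : 0 ≤ sB := hnB.trans hB
  have hnE : 0 ≤ nE := hsE.trans hE
  refine (antitoneOn_quadratic_div_quadratic (fun z hz ↦ hz.1) (fun z hz ↦ ?_) ?_ ?_ ?_).congr
    fun z hz ↦ (one_add_sinr_div_one_add_sinr ?_ ?_).symm
  · have hz₀ : 0 ≤ z := hz.1
    positivity
  · exact le_of_eq_of_le (by ring) hΥ
  · have hminor : 0 ≤ σ2 * ((sB - nB) * nE * (σ2 + P * sE) + (σ2 + P * sB) * nB * (nE - sE)) := by
      positivity
    linear_combination hminor
  · have hminor : 0 ≤ P * (nB * nE * (sE * (sB - nB) + sB * (nE - sE)))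
        + σ2 * (nB * sE * (sB - nB) + nB * nE * (nE - sE) + nE * (sB - nB) * (nE - sE)) := by
      positivity
    linear_combination hminor
  all_goals
    have hz₀ : 0 ≤ z := hz.1
    positivity

theorem secrecyRate_eq_logb_div {z : ℝ} (hsB : 0 ≤ sB) (hnB : 0 ≤ nB) (hsE : 0 ≤ sE)
    (hnE : 0 ≤ nE) (hσ : 0 ≤ σ2) (hz : z ∈ Icc 0 P) :
    secrecyRate P sB nB sE nE σ2 z =
      Real.logb 2 ((1 + sinr P sB nB σ2 z) / (1 + sinr P sE nE σ2 z)) := by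
  have hB : 0 ≤ sinr P sB nB σ2 z := sinr_nonneg hsB hnB hσ hz
  have hE : 0 ≤ sinr P sE nE σ2 z := sinr_nonneg hsE hnE hσ hz
  rw [secrecyRate, Real.logb_div (by positivity) (by positivity)]

theorem stmt_12_general (hP : 0 ≤ P) (hnB : 0 ≤ nB) (hB : nB ≤ sB) (hsE : 0 ≤ sE) (hE : sE ≤ nE)
    (hσ : 0 < σ2)
    (hΥ : P ^ 2 * sB * sE * (nE - nB) * σ2 + P * (sE * nE - sB * nB) * σ2 ^ 2
      + (sE - sB) * σ2 ^ 3 ≤ 0) :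
    AntitoneOn (secrecyRate P sB nB sE nE σ2) (Icc 0 P) ∧
    ∀ z ∈ Icc 0 P, secrecyRate P sB nB sE nE σ2 z ≤ secrecyRate P sB nB sE nE σ2 0 := by
  have hsB : 0 ≤ sB := hnB.trans hB
  have hnE : 0 ≤ nE := hsE.trans hE
  have hanti : AntitoneOn (secrecyRate P sB nB sE nE σ2) (Icc 0 P) := by
    intro x hx y hy hxy
    have hBy : 0 ≤ sinr P sB nB σ2 y := sinr_nonneg hsB hnB hσ.le hy
    have hEy : 0 ≤ sinr P sE nE σ2 y := sinr_nonneg hsE hnE hσ.le hy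
    rw [secrecyRate_eq_logb_div hsB hnB hsE hnE hσ.le hx,
      secrecyRate_eq_logb_div hsB hnB hsE hnE hσ.le hy]
    exact Real.logb_le_logb_of_le one_lt_two (by positivity)
      (antitoneOn_one_add_sinr_div_one_add_sinr hP hnB hB hsE hE hσ hΥ hx hy hxy)
  exact ⟨hanti, fun z hz ↦ hanti (left_mem_Icc.2 hP) hz hz.1⟩

end

/-- When `Υ₃ ≤ 0`, the secrecy rate is monotonically decreasing in the
artificial-noise power on `[0, P]`, so its maximum is achieved at `P_E = 0`. -/
theorem stmt_12 (P gB gE σ2 ρ : ℝ)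
    (hP : 0 < P) (hgB : 0 < gB) (hgE : 0 < gE) (hσ : 0 < σ2)
    (hρ0 : 0 < ρ) (hρ1 : ρ < 1)
    (Y3 : ℝ)
    (hY3 : Y3 = P ^ 2 * gB * gE * (gE - gB * ρ ^ 2) * ρ ^ 2 * σ2
      + P * (gE ^ 2 - gB ^ 2) * ρ ^ 2 * σ2 ^ 2
      + (gE * ρ ^ 2 - gB) * σ2 ^ 3)
    (hY3neg : Y3 ≤ 0)
    (F : ℝ → ℝ)
    (hF : ∀ PE : ℝ, F PE =
      Real.logb 2 (1 + (P - PE) * gB / (PE * gB * ρ ^ 2 + σ2))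
        - Real.logb 2 (1 + (P - PE) * gE * ρ ^ 2 / (PE * gE + σ2))) :
    AntitoneOn F (Set.Icc 0 P) ∧
    ∀ PE ∈ Set.Icc (0 : ℝ) P, F PE ≤ F 0 := by
  have hρ : ρ ^ 2 ≤ 1 := pow_le_one₀ hρ0.le hρ1.le
  obtain rfl : F = secrecyRate P gB (gB * ρ ^ 2) (gE * ρ ^ 2) gE σ2 :=
    funext fun PE ↦ by simp only [hF, secrecyRate, sinr, mul_assoc]
  exact stmt_12_general hP.le (by positivity) (mul_le_of_le_one_right hgB.le hρ) (by positivity)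
    (mul_le_of_le_one_right hgE.le hρ) hσ (by linear_combination hY3neg - hY3)
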